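/- Let F : T → T be a polynomial-like branched covering of a simplicial tree. Then N(F) ≤ deg(F) − 1, where N(F) is the positive integer with h(F(v)) = h(v) + N(F) for all vertices v and deg(F) is the global degree. -/

import Mathlib

open SimpleGraph Function Opposite

/-- A locally finite simplicial tree together with a self-map that is a
branched covering: a simplicial map (edges map onto edges) such that the
induced map on edges adjacent to any vertex is surjective onto the edges
adjacent to the image vertex, and every vertex has finitely many preimages. -/
structure TreeDyn (V : Type) where
  G : SimpleGraph V
  isTree : G.IsTree
  locFin : ∀ v : V, (G.neighborSet v).Finite
  F : V → V
  adjMap : ∀ ⦃v w : V⦄, G.Adj v w → G.Adj (F v) (F w)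
  edgeSurj : ∀ ⦃v w' : V⦄, G.Adj (F v) w' → ∃ w : V, G.Adj v w ∧ F w = w'
  finFibers : ∀ v' : V, {v : V | F v = v'}.Finite

namespace TreeDyn

variable {V : Type}

/-- A local degree function for the branched covering `T.F`: positive on
vertices and edges (edges adjacent to `v` are recorded by their other
endpoint), symmetric on edges, satisfying the Riemann–Hurwitz style
inequality `2 deg(v) - 2 ≥ Σ (deg e - 1)` at each vertex, and the local
equality `deg v = Σ {deg e' : e' adjacent to v, F(e') = F(e)}` for each
edge `e` adjacent to `v`. -/
def IsLocalDeg (T : TreeDyn V) (dV : V → ℕ) (dE : V → V → ℕ) : Prop :=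
  (∀ v w : V, dE v w = dE w v) ∧
  (∀ v : V, 0 < dV v) ∧
  (∀ ⦃v w : V⦄, T.G.Adj v w → 0 < dE v w) ∧
  (∀ v : V, (∑ᶠ w ∈ T.G.neighborSet v, (dE v w - 1)) + 2 ≤ 2 * dV v) ∧
  (∀ ⦃v w : V⦄, T.G.Adj v w →
    dV v = ∑ᶠ w' ∈ {w' : V | T.G.Adj v w' ∧ T.F w' = T.F w}, dE v w')

/-- `x` and `y` are in the same grand orbit if `F^[n] x = F^[m] y` for some `n, m > 0`. -/
def GrandOrbit (T : TreeDyn V) (x y : V) : Prop :=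
  ∃ n m : ℕ, 0 < n ∧ 0 < m ∧ T.F^[n] x = T.F^[m] y

end TreeDyn

/-- The natural topology on the space of ends of a graph: the subspace
topology induced from the product of the (discrete) spaces of components
of complements of finite sets. -/
def endTop {V : Type} (G : SimpleGraph V) : TopologicalSpace G.end :=
  TopologicalSpace.induced Subtype.val
    (⨅ K : (Finset V)ᵒᵖ, TopologicalSpace.induced (fun f => f K) ⊥)

/-- An end is isolated if it is an isolated point of the space of ends. -/
def IsIsolatedEnd {V : Type} (G : SimpleGraph V) (e : G.end) : Prop :=
  @IsOpen G.end (endTop G) {e}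

namespace TreeDyn

variable {V : Type}

/-- `T` is polynomial-like with distinguished end `infty`:
(II) a local degree function exists, (I) `infty` is the unique isolated end,
(III) no vertex has valence one, and (IV) the grand orbit of every vertex
contains a vertex of valence at least three. -/
def IsPolyLike (T : TreeDyn V) (infty : T.G.end) : Prop :=
  (∃ dV dE, T.IsLocalDeg dV dE) ∧
  IsIsolatedEnd T.G infty ∧
  (∀ e : T.G.end, IsIsolatedEnd T.G e → e = infty) ∧
  (∀ v : V, (T.G.neighborSet v).ncard ≠ 1) ∧
  (∀ v : V, ∃ w : V, T.GrandOrbit v w ∧ 3 ≤ (T.G.neighborSet w).ncard)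

/-- The vertex `x` lies below the vertex `v` (the path from `x` to the
end `infty` passes through `v`): either `x = v`, or `x` and `infty`
determine different components of the complement of `{v}`. -/
def Below (T : TreeDyn V) (infty : T.G.end) (v x : V) : Prop :=
  x = v ∨ ∃ h : x ∉ (({v} : Finset V) : Set V),
    T.G.componentComplMk h ≠ infty.val (op ({v} : Finset V))

/-- The end `p` lies below the vertex `v` (the path from `p` to `infty`
passes through `v`). -/
def EndBelow (T : TreeDyn V) (infty : T.G.end) (v : V) (p : T.G.end) : Prop :=
  p.val (op ({v} : Finset V)) ≠ infty.val (op ({v} : Finset V))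

/-- `v₀` is the base of the tree: the vertex of valence ≥ 3 closest to
`infty`, i.e. every vertex of valence ≥ 3 lies below it. -/
def IsBase (T : TreeDyn V) (infty : T.G.end) (v₀ : V) : Prop :=
  3 ≤ (T.G.neighborSet v₀).ncard ∧
  ∀ w : V, 3 ≤ (T.G.neighborSet w).ncard → T.Below infty v₀ w

open Classical in
/-- The combinatorial height relative to the base `v₀`: `|h v|` is the
graph distance to `v₀`, with `h v ≥ 0` exactly when `v` lies on the ray
from `v₀` to `infty` (i.e. `v₀` lies below `v`). -/
noncomputable def height (T : TreeDyn V) (infty : T.G.end) (v₀ : V) (v : V) : ℤ :=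
  if T.Below infty v v₀ then (T.G.dist v₀ v : ℤ) else -(T.G.dist v₀ v : ℤ)

/-- `Dg` is the global degree of `T.F`: for every edge `{v,w}`, the sum of
the degrees of the edges mapping onto it equals `Dg`. -/
def IsGlobalDeg (T : TreeDyn V) (dE : V → V → ℕ) (Dg : ℕ) : Prop :=
  ∀ ⦃v w : V⦄, T.G.Adj v w →
    Dg = ∑ᶠ a ∈ {a : V | T.F a = v}, ∑ᶠ b ∈ {b : V | T.G.Adj a b ∧ T.F b = w}, dE a b

/-- The critical multiplicity of a vertex. -/
noncomputable def multV (T : TreeDyn V) (dV : V → ℕ) (dE : V → V → ℕ) (v : V) : ℕ :=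
  2 * dV v - 2 - ∑ᶠ w ∈ T.G.neighborSet v, (dE v w - 1)

/-- The critical multiplicity of an end `p ≠ infty`: the limiting
(= minimal) value of `dV` along the path from `infty` to `p`, minus one. -/
noncomputable def multEnd (T : TreeDyn V) (infty : T.G.end) (dV : V → ℕ) (p : T.G.end) : ℕ :=
  sInf {d : ℕ | ∃ v : V, T.EndBelow infty v p ∧ dV v = d} - 1

/-- `μ` is the mass function: `μ v = 1` for `h(v) ≥ 0` and
`μ(F v) = (deg F / deg v) · μ v`. -/
def IsMass (T : TreeDyn V) (infty : T.G.end) (v₀ : V) (dV : V → ℕ) (Dg : ℕ)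
    (μ : V → ℚ) : Prop :=
  (∀ v : V, 0 ≤ T.height infty v₀ v → μ v = 1) ∧
  (∀ v : V, μ (T.F v) = ((Dg : ℚ) / (dV v : ℚ)) * μ v)

end TreeDyn

namespace SimpleGraph

variable {V : Type*} {G : SimpleGraph V}

/-- In a tree, the neighbour of `x` closer to `u` is unique. -/
theorem IsTree.eq_of_adj_of_dist_eq (hG : G.IsTree) {u x y z : V} (hy : G.Adj y x)
    (hz : G.Adj z x) (hdy : G.dist u x = G.dist u y + 1) (hdz : G.dist u x = G.dist u z + 1) :
    y = z := by
  obtain ⟨p, hp⟩ := hG.connected.exists_walk_length_eq_dist u y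
  obtain ⟨q, hq⟩ := hG.connected.exists_walk_length_eq_dist u z
  have hp' : (p.concat hy).IsPath := Walk.isPath_of_length_eq_dist _ (by simp [hp, hdy])
  have hq' : (q.concat hz).IsPath := Walk.isPath_of_length_eq_dist _ (by simp [hq, hdz])
  have h : p.concat hy = q.concat hz :=
    congrArg Subtype.val ((hG.isAcyclic.subsingleton_path u x).elim ⟨_, hp'⟩ ⟨_, hq'⟩)
  have h' := congrArg Walk.penultimate h
  simpa using h'

/-- Two vertices of a component of the complement of `K` are joined by a walk avoiding `K`. -/
theorem ComponentCompl.exists_walk {K : Set V} (C : G.ComponentCompl K) {x y : V}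
    (hx : x ∈ C) (hy : y ∈ C) : ∃ p : G.Walk x y, ∀ z ∈ p.support, z ∉ K := by
  obtain ⟨hxK, rfl⟩ := hx
  obtain ⟨hyK, h⟩ := hy
  obtain ⟨p⟩ := (ConnectedComponent.exact h).symm
  have hp : ∀ z ∈ (p.map (Embedding.induce (G := G) Kᶜ).toHom).support, z ∉ K := by
    intro z hz
    rw [Walk.support_map, List.mem_map] at hz
    obtain ⟨⟨a, ha⟩, -, rfl⟩ := hz
    exact ha
  exact ⟨_, hp⟩

/-- A walk in an acyclic graph between the endpoints of an edge uses that edge. -/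
theorem IsAcyclic.mem_edges_of_adj (hG : G.IsAcyclic) {v w : V} (h : G.Adj v w)
    (p : G.Walk v w) : s(v, w) ∈ p.edges :=
  isBridge_iff_forall_walk_mem_edges.1 (isAcyclic_iff_forall_adj_isBridge.1 hG h) p

end SimpleGraph

namespace TreeDyn

variable {V : Type} (T : TreeDyn V) (infty : T.G.end)

/-- The component of the complement of `v` containing the end `infty`. -/
def upper (v : V) : T.G.ComponentCompl (({v} : Finset V) : Set V) :=
  infty.val (op ({v} : Finset V))

variable {T infty}

theorem notMem_upper_self (v : V) : v ∉ T.upper infty v := fun h =>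
  ComponentCompl.notMem_of_mem h (by simp)

theorem mem_upper_of_adj {v x y : V} (hx : x ∈ T.upper infty v) (h : T.G.Adj x y)
    (hy : y ≠ v) : y ∈ T.upper infty v :=
  ComponentCompl.mem_of_adj x y hx (by simpa using hy) h

theorem exists_walk_of_mem_upper {v x y : V} (hx : x ∈ T.upper infty v)
    (hy : y ∈ T.upper infty v) : ∃ p : T.G.Walk x y, v ∉ p.support := by
  obtain ⟨p, hp⟩ := ComponentCompl.exists_walk _ hx hy
  exact ⟨p, fun h => hp v h (by simp)⟩

theorem below_iff {v x : V} : T.Below infty v x ↔ x ∉ T.upper infty v := by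
  constructor
  · rintro (rfl | ⟨h, hne⟩)
    · exact notMem_upper_self _
    · rintro ⟨_, hx⟩
      exact hne hx
  · intro h
    by_cases hx : x = v
    · exact Or.inl hx
    · have hx' : x ∉ (({v} : Finset V) : Set V) := by simpa using hx
      exact Or.inr ⟨hx', fun he => h ⟨hx', he⟩⟩

theorem exists_adj_mem_upper (v : V) : ∃ w, T.G.Adj v w ∧ w ∈ T.upper infty v := by
  obtain ⟨⟨c, k⟩, hc, hk, h⟩ := ComponentCompl.exists_adj_boundary_pair
    T.isTree.connected.preconnected (by simp) (T.upper infty v)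
  obtain rfl : k = v := by simpa using hk
  exact ⟨c, h.symm, hc⟩

open Classical in
theorem exists_mem_upper_inter (v w : V) : ∃ x, x ∈ T.upper infty v ∧ x ∈ T.upper infty w ∧
    (T.G.Adj x v ∨ T.G.Adj x w) := by
  have key : ∀ u ∈ ({v, w} : Finset V), ∀ x : V,
      x ∈ (show T.G.ComponentCompl (({v, w} : Finset V) : Set V) from
        infty.val (op ({v, w} : Finset V))) → x ∈ T.upper infty u := by
    intro u hu x hx
    have hsub : ({u} : Finset V) ⊆ {v, w} := by simpa using hu
    obtain ⟨h, he⟩ := hx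
    have := end_hom_mk_of_mk T.G infty.property
      (CategoryTheory.opHomOfLE hsub) h he.symm
    exact ⟨_, this.symm⟩
  obtain ⟨⟨c, k⟩, hc, hk, h⟩ := ComponentCompl.exists_adj_boundary_pair
    T.isTree.connected.preconnected (by simp)
    (show T.G.ComponentCompl (({v, w} : Finset V) : Set V) from
      infty.val (op ({v, w} : Finset V)))
  refine ⟨c, key v (by simp) c hc, key w (by simp) c hc, ?_⟩
  have hk' : k = v ∨ k = w := by simpa using hk
  rcases hk' with rfl | rfl
  · exact Or.inl h
  · exact Or.inr h

theorem Below.antisymm {v w : V} (h : T.Below infty v w) (h' : T.Below infty w v) : v = w := by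
  rw [below_iff] at h h'
  by_contra hne
  obtain ⟨x, hxv, hxw, hx | hx⟩ := exists_mem_upper_inter (T := T) (infty := infty) v w
  · exact h' (mem_upper_of_adj hxw hx hne)
  · exact h (mem_upper_of_adj hxv hx (Ne.symm hne))

variable (T infty) in
/-- The neighbour of `v` in the direction of the end `infty`. -/
noncomputable def parent (v : V) : V := (exists_adj_mem_upper (T := T) (infty := infty) v).choose

theorem adj_parent (v : V) : T.G.Adj v (T.parent infty v) :=
  (exists_adj_mem_upper (T := T) (infty := infty) v).choose_spec.1

theorem parent_mem_upper (v : V) : T.parent infty v ∈ T.upper infty v :=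
  (exists_adj_mem_upper (T := T) (infty := infty) v).choose_spec.2

theorem eq_parent_of_mem_upper {v w : V} (h : T.G.Adj v w) (hw : w ∈ T.upper infty v) :
    w = T.parent infty v := by
  by_contra hne
  obtain ⟨p, hp⟩ := exists_walk_of_mem_upper hw (parent_mem_upper v)
  have := T.isTree.isAcyclic.mem_edges_of_adj (adj_parent (infty := infty) v) (Walk.cons h p)
  rw [Walk.edges_cons, List.mem_cons] at this
  rcases this with h1 | h1
  · simp only [Sym2.eq_iff] at h1
    rcases h1 with ⟨-, h1⟩ | ⟨h1, -⟩
    · exact hne h1.symm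
    · exact h.ne h1
  · exact hp (p.fst_mem_support_of_mem_edges h1)

theorem parent_parent_ne (v : V) : T.parent infty (T.parent infty v) ≠ v := by
  intro h
  set w := T.parent infty v with hw
  have hwv : w ∈ T.upper infty v := parent_mem_upper v
  have hvw : v ∈ T.upper infty w := h ▸ parent_mem_upper w
  have hadj : T.G.Adj v w := adj_parent v
  obtain ⟨x, hxv, hxw, -⟩ := exists_mem_upper_inter (T := T) (infty := infty) v w
  obtain ⟨p, hp⟩ := exists_walk_of_mem_upper hvw hxw
  obtain ⟨q, hq⟩ := exists_walk_of_mem_upper hxv hwv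
  have := T.isTree.isAcyclic.mem_edges_of_adj hadj (p.append q)
  rw [Walk.edges_append, List.mem_append] at this
  rcases this with h1 | h1
  · exact hp (p.snd_mem_support_of_mem_edges h1)
  · exact hq (q.fst_mem_support_of_mem_edges h1)

theorem parent_eq_or_of_adj {v w : V} (h : T.G.Adj v w) :
    T.parent infty v = w ∨ T.parent infty w = v := by
  by_contra! hne
  refine h.ne (Below.antisymm (infty := infty) (T := T) ?_ ?_)
  · exact below_iff.2 fun hw => hne.1 (eq_parent_of_mem_upper h hw).symm
  · exact below_iff.2 fun hv => hne.2 (eq_parent_of_mem_upper h.symm hv).symm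

theorem dist_iterate_parent (v : V) (n : ℕ) : T.G.dist v ((T.parent infty)^[n] v) = n := by
  have key : ∀ n, T.G.dist v ((T.parent infty)^[n] v) = n ∧
      T.G.dist v ((T.parent infty)^[n + 1] v) = n + 1 := by
    intro n
    induction n with
    | zero => simpa using adj_parent v
    | succ n ih =>
      refine ⟨ih.2, ?_⟩
      rw [iterate_succ_apply'] at ih ⊢
      rw [iterate_succ_apply']
      set u := (T.parent infty)^[n] v
      rcases T.isTree.dist_eq_dist_add_one_of_adj v (adj_parent (infty := infty)
        (T.parent infty u)) with h | h
      · exact absurd (T.isTree.eq_of_adj_of_dist_eq (adj_parent (infty := infty) _).symm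
          (adj_parent u) h (by omega)) (parent_parent_ne u)
      · omega
  exact (key n).1

theorem below_iterate_parent (n : ℕ) (v : V) :
    T.Below infty ((T.parent infty)^[n] v) v := by
  rw [below_iff]
  have key : ∀ k ≤ n, (T.parent infty)^[k] v ∉ T.upper infty ((T.parent infty)^[n] v) := by
    intro k hk
    induction hk using Nat.decreasingInduction with
    | self => exact notMem_upper_self _
    | of_succ k hk ih =>
      intro hmem
      rw [iterate_succ_apply'] at ih
      set u := (T.parent infty)^[k] v
      by_cases hu : T.parent infty u = (T.parent infty)^[n] v
      · rw [← hu] at hmem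
        exact parent_parent_ne u
          (eq_parent_of_mem_upper (adj_parent (infty := infty) u).symm hmem).symm
      · exact ih (mem_upper_of_adj hmem (adj_parent u) hu)
  exact key 0 (Nat.zero_le n)

theorem exists_iterate_parent_eq (v w : V) :
    ∃ a b : ℕ, (T.parent infty)^[a] v = (T.parent infty)^[b] w := by
  obtain ⟨p⟩ := T.isTree.connected v w
  induction p with
  | nil => exact ⟨0, 0, rfl⟩
  | @cons u x y h p ih =>
    obtain ⟨a, b, hab⟩ := ih
    rcases parent_eq_or_of_adj (infty := infty) h with h | h
    · exact ⟨a + 1, b, by rw [iterate_succ_apply, h, hab]⟩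
    · refine ⟨a, b + 1, ?_⟩
      rw [iterate_succ_apply', ← hab, ← iterate_succ_apply' (T.parent infty), iterate_succ_apply, h]

end TreeDyn

/-- If a weight `m` dominates at every vertex the total weight of its children, with a gain of at
least one at the vertices of `S`, then the weight of a common ancestor bounds the size of `S`. -/
theorem Finset.card_le_of_sum_children_le {V : Type*} {p : V → V} {C : V → Finset V}
    {m : V → ℕ} (hC : ∀ v, v ∈ C (p v)) (hm : ∀ v, ∑ c ∈ C v, m c ≤ m v) (n : ℕ) (r : V)
    (S : Finset V) (hS : ∀ w ∈ S, ∑ c ∈ C w, m c + 1 ≤ m w)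
    (hr : ∀ w ∈ S, ∃ k ≤ n, p^[k] w = r) : S.card ≤ m r := by
  classical
  induction n generalizing r S with
  | zero =>
    have hsub : S ⊆ {r} := fun w hw => by
      obtain ⟨k, hk, rfl⟩ := hr w hw
      obtain rfl : k = 0 := by omega
      simp
    rcases Finset.subset_singleton_iff.1 hsub with rfl | rfl
    · simp
    · have := hS r (by simp)
      simp only [Finset.card_singleton]
      omega
  | succ n ih =>
    let A : V → Finset V := fun c => {w ∈ S | ∃ k ≤ n, p^[k] w = c}
    have hA : ∀ c, (A c).card ≤ m c := fun c =>
      ih c (A c) (fun w hw => hS w (Finset.mem_filter.1 hw).1)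
        (fun w hw => (Finset.mem_filter.1 hw).2)
    have hsub : S ⊆ {w ∈ S | w = r} ∪ (C r).biUnion A := by
      intro w hw
      obtain ⟨k, hk, hkr⟩ := hr w hw
      cases k with
      | zero => exact Finset.mem_union_left _ (Finset.mem_filter.2 ⟨hw, hkr⟩)
      | succ k =>
        rw [iterate_succ_apply'] at hkr
        exact Finset.mem_union_right _ (Finset.mem_biUnion.2
          ⟨p^[k] w, hkr ▸ hC _, Finset.mem_filter.2 ⟨hw, k, by omega, rfl⟩⟩)
    have h1 : S.card ≤ ({w ∈ S | w = r} : Finset V).card + ∑ c ∈ C r, m c :=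
      (Finset.card_le_card hsub).trans <| (Finset.card_union_le _ _).trans <|
        Nat.add_le_add_left (Finset.card_biUnion_le.trans (Finset.sum_le_sum fun c _ => hA c)) _
    by_cases hrS : r ∈ S
    · have h2 := hS r hrS
      have h3 : ({w ∈ S | w = r} : Finset V).card ≤ 1 :=
        Finset.card_le_one.2 fun a ha b hb =>
          (Finset.mem_filter.1 ha).2.trans (Finset.mem_filter.1 hb).2.symm
      omega
    · have h2 : ({w ∈ S | w = r} : Finset V) = ∅ :=
        Finset.filter_eq_empty_iff.2 fun w hw hwr => hrS (hwr ▸ hw)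
      rw [h2, Finset.card_empty] at h1
      have := hm r
      omega

namespace TreeDyn

variable {V : Type} {T : TreeDyn V} {infty : T.G.end} {v₀ : V}

open Classical in
variable (T infty) in
/-- The neighbours of `v` whose parent is `v`. -/
noncomputable def children (v : V) : Finset V :=
  {c ∈ (T.locFin v).toFinset | T.parent infty c = v}

theorem mem_children {v c : V} : c ∈ T.children infty v ↔ T.parent infty c = v := by
  simp only [children, Finset.mem_filter, Set.Finite.mem_toFinset, mem_neighborSet,
    and_iff_right_iff_imp]
  rintro rfl
  exact (adj_parent c).symm

theorem parent_notMem_children (v : V) : T.parent infty v ∉ T.children infty v := fun h =>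
  parent_parent_ne v (mem_children.1 h)

open Classical in
theorem neighborSet_eq (v : V) : T.G.neighborSet v =
    ((insert (T.parent infty v) (T.children infty v) : Finset V) : Set V) := by
  ext w
  simp only [mem_neighborSet, Finset.coe_insert, Set.mem_insert_iff, Finset.mem_coe, mem_children]
  constructor
  · intro h
    exact (parent_eq_or_of_adj h).imp_left Eq.symm
  · rintro (rfl | rfl)
    · exact adj_parent v
    · exact (adj_parent w).symm

theorem ncard_neighborSet (v : V) :
    (T.G.neighborSet v).ncard = (T.children infty v).card + 1 := by
  classical
  rw [neighborSet_eq (infty := infty), Set.ncard_coe_finset,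
    Finset.card_insert_of_notMem (parent_notMem_children v)]

theorem three_le_ncard_of_parent_eq {x y : V} (hne : x ≠ y)
    (h : T.parent infty x = T.parent infty y) :
    3 ≤ (T.G.neighborSet (T.parent infty x)).ncard := by
  rw [ncard_neighborSet (infty := infty)]
  have : 1 < (T.children infty (T.parent infty x)).card :=
    Finset.one_lt_card.2 ⟨x, mem_children.2 rfl, y, mem_children.2 h.symm, hne⟩
  omega

theorem IsBase.eq_of_below (hbase : T.IsBase infty v₀) {w : V}
    (hw : 3 ≤ (T.G.neighborSet w).ncard) (h : T.Below infty w v₀) : w = v₀ :=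
  h.antisymm (hbase.2 w hw)

theorem IsBase.comparable (hbase : T.IsBase infty v₀) (v : V) :
    (∃ n, (T.parent infty)^[n] v₀ = v) ∨ ∃ n, (T.parent infty)^[n + 1] v = v₀ := by
  obtain ⟨a, b, hab⟩ := exists_iterate_parent_eq (infty := infty) v v₀
  induction a generalizing b with
  | zero => exact Or.inl ⟨b, hab.symm⟩
  | succ a ih =>
    cases b with
    | zero => exact Or.inr ⟨a, hab⟩
    | succ b =>
      by_cases heq : (T.parent infty)^[a] v = (T.parent infty)^[b] v₀
      · exact ih b heq
      · exfalso
        have hab' := hab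
        rw [iterate_succ_apply', iterate_succ_apply'] at hab'
        have hb := three_le_ncard_of_parent_eq heq hab'
        rw [hab', ← iterate_succ_apply' (T.parent infty)] at hb
        have h0 := hbase.eq_of_below hb (below_iterate_parent (b + 1) v₀)
        have hd := dist_iterate_parent (infty := infty) v₀ (b + 1)
        rw [h0, dist_self] at hd
        omega

theorem height_iterate_parent (n : ℕ) :
    T.height infty v₀ ((T.parent infty)^[n] v₀) = n := by
  rw [height, if_pos (below_iterate_parent n v₀), dist_iterate_parent]

theorem height_of_iterate_parent_eq {n : ℕ} {v : V} (h : (T.parent infty)^[n] v = v₀) :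
    T.height infty v₀ v = -n := by
  have hd : T.G.dist v₀ v = n := by
    rw [dist_comm, ← h, dist_iterate_parent]
  by_cases hv : T.Below infty v v₀
  · have hb : T.Below infty v₀ v := h ▸ below_iterate_parent n v
    obtain rfl := hv.antisymm hb
    rw [dist_self] at hd
    subst hd
    simp [height]
  · rw [height, if_neg hv, hd]

theorem IsBase.height_parent (hbase : T.IsBase infty v₀) (v : V) :
    T.height infty v₀ (T.parent infty v) = T.height infty v₀ v + 1 := by
  rcases hbase.comparable v with ⟨n, rfl⟩ | ⟨n, hn⟩
  · rw [← iterate_succ_apply' (T.parent infty), height_iterate_parent, height_iterate_parent]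
    push_cast
    ring
  · rw [height_of_iterate_parent_eq hn,
      height_of_iterate_parent_eq (n := n) (by rw [← hn, iterate_succ_apply])]
    push_cast
    ring

theorem IsBase.exists_iterate_parent_eq (hbase : T.IsBase infty v₀) {w : V}
    (hw : 3 ≤ (T.G.neighborSet w).ncard) : ∃ n, (T.parent infty)^[n] w = v₀ := by
  rcases hbase.comparable w with ⟨n, rfl⟩ | ⟨n, hn⟩
  · exact ⟨0, hbase.eq_of_below hw (below_iterate_parent n v₀)⟩
  · exact ⟨n + 1, hn⟩

theorem IsBase.height_nonpos (hbase : T.IsBase infty v₀) {w : V}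
    (hw : 3 ≤ (T.G.neighborSet w).ncard) : T.height infty v₀ w ≤ 0 := by
  obtain ⟨n, hn⟩ := hbase.exists_iterate_parent_eq hw
  rw [height_of_iterate_parent_eq hn]
  omega

theorem IsBase.map_parent (hbase : T.IsBase infty v₀) {N : ℤ}
    (hN : ∀ v, T.height infty v₀ (T.F v) = T.height infty v₀ v + N) (v : V) :
    T.F (T.parent infty v) = T.parent infty (T.F v) := by
  rcases parent_eq_or_of_adj (infty := infty) (T.adjMap (adj_parent (infty := infty) v)) with h | h
  · exact h.symm
  · have h1 := hbase.height_parent (T.F (T.parent infty v))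
    have h2 := hbase.height_parent v
    rw [h, hN, hN] at h1
    omega

theorem height_iterate {N : ℤ} (hN : ∀ v, T.height infty v₀ (T.F v) = T.height infty v₀ v + N)
    (n : ℕ) (v : V) : T.height infty v₀ (T.F^[n] v) = T.height infty v₀ v + n * N := by
  induction n with
  | zero => simp
  | succ n ih =>
    rw [iterate_succ_apply', hN, ih]
    push_cast
    ring

section LocalDegree

variable {dV : V → ℕ} {dE : V → V → ℕ}

theorem IsLocalDeg.edge_parent (hdeg : T.IsLocalDeg dV dE)
    (hF : ∀ v, T.F (T.parent infty v) = T.parent infty (T.F v)) (v : V) :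
    dE v (T.parent infty v) = dV v := by
  have hset : {w' : V | T.G.Adj v w' ∧ T.F w' = T.F (T.parent infty v)} =
      {T.parent infty v} := by
    ext w
    simp only [Set.mem_ofPred_eq, Set.mem_singleton_iff]
    constructor
    · rintro ⟨hadj, hw⟩
      rcases parent_eq_or_of_adj (infty := infty) hadj with h | h
      · exact h.symm
      · have h1 := hF w
        rw [h, hw, hF] at h1
        exact absurd h1.symm (parent_parent_ne _)
    · rintro rfl
      exact ⟨adj_parent v, rfl⟩
  rw [hdeg.2.2.2.2 (adj_parent (infty := infty) v), hset, finsum_mem_singleton]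

theorem IsLocalDeg.edge_child (hdeg : T.IsLocalDeg dV dE)
    (hF : ∀ v, T.F (T.parent infty v) = T.parent infty (T.F v)) {v c : V}
    (hc : c ∈ T.children infty v) : dE v c = dV c := by
  rw [mem_children] at hc
  rw [hdeg.1, ← hc, hdeg.edge_parent hF]

theorem IsLocalDeg.sum_children_le (hdeg : T.IsLocalDeg dV dE)
    (hF : ∀ v, T.F (T.parent infty v) = T.parent infty (T.F v)) (v : V) :
    ∑ c ∈ T.children infty v, (dV c - 1) ≤ dV v - 1 := by
  classical
  have h := hdeg.2.2.2.1 v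
  rw [neighborSet_eq (infty := infty), finsum_mem_coe_finset,
    Finset.sum_insert (parent_notMem_children v), hdeg.edge_parent hF,
    Finset.sum_congr rfl fun c hc => by rw [hdeg.edge_child hF hc]] at h
  have := hdeg.2.1 v
  omega

/-- A branch vertex whose image is not a branch vertex is critical. -/
theorem IsLocalDeg.sum_children_lt (hdeg : T.IsLocalDeg dV dE)
    (hF : ∀ v, T.F (T.parent infty v) = T.parent infty (T.F v)) {w : V}
    (hw : 3 ≤ (T.G.neighborSet w).ncard) (hFw : ¬ 3 ≤ (T.G.neighborSet (T.F w)).ncard) :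
    ∑ c ∈ T.children infty w, (dV c - 1) + 1 ≤ dV w - 1 := by
  rw [ncard_neighborSet (infty := infty)] at hw
  obtain ⟨c₀, hc₀⟩ : (T.children infty w).Nonempty := Finset.card_pos.1 (by omega)
  have hset : {w' : V | T.G.Adj w w' ∧ T.F w' = T.F c₀} = (T.children infty w : Set V) := by
    have hpc₀ := hF c₀
    rw [mem_children.1 hc₀] at hpc₀
    ext c
    simp only [Set.mem_ofPred_eq, Finset.mem_coe, mem_children]
    constructor
    · rintro ⟨hadj, hc⟩
      refine (parent_eq_or_of_adj hadj).resolve_left fun h => ?_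
      rw [← h, hF] at hc
      rw [← hc] at hpc₀
      exact parent_parent_ne _ hpc₀.symm
    · rintro rfl
      refine ⟨(adj_parent c).symm, by_contra fun hne => hFw ?_⟩
      rw [hF] at hpc₀ ⊢
      exact three_le_ncard_of_parent_eq hne hpc₀
  have hadj : T.G.Adj w c₀ := mem_children.1 hc₀ ▸ (adj_parent c₀).symm
  have hsum := hdeg.2.2.2.2 hadj
  rw [hset, finsum_mem_coe_finset,
    Finset.sum_congr rfl fun c hc => hdeg.edge_child hF hc] at hsum
  have hsplit : ∑ c ∈ T.children infty w, dV c =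
      ∑ c ∈ T.children infty w, (dV c - 1) + (T.children infty w).card := by
    rw [Finset.card_eq_sum_ones, ← Finset.sum_add_distrib]
    exact Finset.sum_congr rfl fun c _ => (Nat.sub_add_cancel (hdeg.2.1 c)).symm
  omega

end LocalDegree

theorem IsGlobalDeg.edge_le {dE : V → V → ℕ} {Dg : ℕ} (hDg : T.IsGlobalDeg dE Dg) {v w : V}
    (h : T.G.Adj v w) : dE v w ≤ Dg := by
  have hfin : ({b : V | T.G.Adj v b ∧ T.F b = T.F w}).Finite :=
    (T.locFin v).subset fun b hb => hb.1
  rw [hDg (T.adjMap h), finsum_mem_eq_finite_toFinset_sum _ (T.finFibers (T.F v))]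
  calc dE v w ≤ ∑ᶠ b ∈ {b : V | T.G.Adj v b ∧ T.F b = T.F w}, dE v b := by
        rw [finsum_mem_eq_finite_toFinset_sum _ hfin]
        exact Finset.single_le_sum (f := fun b => dE v b) (fun _ _ => Nat.zero_le _)
          (by simpa using h)
    _ ≤ _ := Finset.single_le_sum
        (f := fun a => ∑ᶠ b ∈ {b : V | T.G.Adj a b ∧ T.F b = T.F w}, dE a b)
        (fun _ _ => Nat.zero_le _) (by simp)

/-- The forward orbit of a branch vertex contains a last branch vertex. -/
theorem IsBase.exists_iterate_last_branch (hbase : T.IsBase infty v₀) {N : ℕ} (hN0 : 0 < N)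
    (hN : ∀ v, T.height infty v₀ (T.F v) = T.height infty v₀ v + (N : ℤ)) {w : V}
    (hw : 3 ≤ (T.G.neighborSet w).ncard) :
    ∃ k, 3 ≤ (T.G.neighborSet (T.F^[k] w)).ncard ∧
      ¬ 3 ≤ (T.G.neighborSet (T.F (T.F^[k] w))).ncard := by
  by_contra! hcon
  have hall : ∀ k, 3 ≤ (T.G.neighborSet (T.F^[k] w)).ncard := by
    intro k
    induction k with
    | zero => exact hw
    | succ k ih => exact iterate_succ_apply' T.F k w ▸ hcon k ih
  have h1 := hbase.height_nonpos (hall ((T.height infty v₀ w).natAbs + 1))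
  rw [height_iterate hN] at h1
  push_cast at h1
  have h2 : (1 : ℤ) ≤ N := by exact_mod_cast hN0
  have h3 := neg_abs_le (T.height infty v₀ w)
  have h4 := abs_nonneg (T.height infty v₀ w)
  nlinarith

/-- Every residue class of heights modulo `N` contains a branch vertex whose image is not a
branch vertex. -/
theorem IsPolyLike.exists_branch_modEq (hpl : T.IsPolyLike infty) (hbase : T.IsBase infty v₀)
    {N : ℕ} (hN0 : 0 < N)
    (hN : ∀ v, T.height infty v₀ (T.F v) = T.height infty v₀ v + (N : ℤ)) (i : ℕ) :
    ∃ w, 3 ≤ (T.G.neighborSet w).ncard ∧ ¬ 3 ≤ (T.G.neighborSet (T.F w)).ncard ∧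
      T.height infty v₀ w ≡ i [ZMOD N] := by
  obtain ⟨w, ⟨n, m, -, -, hnm⟩, hw⟩ := hpl.2.2.2.2 ((T.parent infty)^[i] v₀)
  obtain ⟨k, hk, hk'⟩ := hbase.exists_iterate_last_branch hN0 hN hw
  refine ⟨_, hk, hk', ?_⟩
  have h := congrArg (T.height infty v₀) hnm
  rw [height_iterate hN, height_iterate hN, height_iterate_parent] at h
  rw [height_iterate hN]
  exact (Int.modEq_iff_add_fac.2 ⟨m - n - k, by linear_combination h⟩)

end TreeDyn

/-- **Bound on the translation constant.**
Let `F : T → T` be a polynomial-like branched covering with global degree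
`Dg = deg F`, base `v₀`, and let `N = N(F)` be the positive integer with
`h(F v) = h(v) + N` for all vertices `v`.  Then `N ≤ Dg − 1`. -/
theorem translation_constant_le
    {V : Type} (T : TreeDyn V) (infty : T.G.end)
    (hpl : T.IsPolyLike infty)
    (dV : V → ℕ) (dE : V → V → ℕ) (hdeg : T.IsLocalDeg dV dE)
    (v₀ : V) (hbase : T.IsBase infty v₀)
    (Dg : ℕ) (hDg : T.IsGlobalDeg dE Dg)
    (N : ℕ) (hN0 : 0 < N)
    (hN : ∀ v : V, T.height infty v₀ (T.F v) = T.height infty v₀ v + (N : ℤ)) :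
    N ≤ Dg - 1 := by
  have hF := hbase.map_parent hN
  choose w hw hFw hmod using fun i : Fin N => hpl.exists_branch_modEq hbase hN0 hN i
  choose k hk using fun i => hbase.exists_iterate_parent_eq (hw i)
  have hinj : Function.Injective w := by
    intro i j hij
    have h := (hmod i).symm.trans (hij ▸ hmod j)
    exact Fin.ext (((Int.natCast_modEq_iff.1 h).eq_of_lt_of_lt i.2 j.2))
  have hcard := Finset.card_le_of_sum_children_le (p := T.parent infty)
    (C := T.children infty) (m := fun v => dV v - 1) (fun v => TreeDyn.mem_children.2 rfl)
    (hdeg.sum_children_le hF) (Finset.univ.sup k) v₀ (Finset.univ.map ⟨w, hinj⟩)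
    (by simpa using fun i => hdeg.sum_children_lt hF (hw i) (hFw i))
    (by simpa using fun i => ⟨k i, Finset.le_sup (Finset.mem_univ i), hk i⟩)
  rw [Finset.card_map, Finset.card_univ, Fintype.card_fin] at hcard
  have hle := hDg.edge_le (TreeDyn.adj_parent (infty := infty) v₀)
  rw [hdeg.edge_parent hF] at hle
  exact hcard.trans (Nat.sub_le_sub_right hle 1)
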